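/- (Corollary 2, augmented-alphabet form) Let P' = Option P be the alphabet P augmented with a novel symbol ψ = none (so elements of P embed as some s), let I' = (P')^n, and for τ' ∈ P' let T'_{q,τ'} denote the transition operator on functions I' → ℝ defined by the same formula as T with alphabet P' and fill value τ'. For x : I → ℝ let ι x : I' → ℝ be the extension by zero: (ι x)(v) = x(u) if v = (some) ∘ u for some u ∈ I, and (ι x)(v) = 0 otherwise. Then for any mask distribution q on M, any τ ∈ P, and any x₁, x₂ : I → ℝ: if T_{q,τ} x₁ = T_{q,τ} x₂, then T'_{q,ψ}(ι x₁) = T'_{q,ψ}(ι x₂). Hence using the distinguished fill value ψ, which identifies exactly which entries are missing, does not make two indistinguishable data distributions distinguishable. -/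

import Mathlib

open Finset
open scoped Classical

/-- The transition operator `T_{q,τ}`: for a mask distribution `q` on masks
`Fin n → Bool`, a fill-in value `τ`, and `x : (Fin n → P) → ℝ`,
`(T q τ x) v = ∑_{m} ∑_{u} q m * x u * [f_τ(u, m) = v]`, where the masking
operator is `f_τ(u,m) d = if m d then u d else τ`. -/
noncomputable def T {n : ℕ} {P : Type*} [Fintype P] [DecidableEq P]
    (q : (Fin n → Bool) → ℝ) (τ : P) (x : (Fin n → P) → ℝ) : (Fin n → P) → ℝ :=
  fun v => ∑ m : Fin n → Bool, ∑ u : Fin n → P,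
    q m * x u * (if (fun d => if m d then u d else τ) = v then (1 : ℝ) else 0)

/-- The marginal `x([v]_m) = ∑_{u ∈ [v]_m} x u`, where `u ∈ [v]_m` iff
`u` agrees with `v` on every coordinate observed by the mask `m`. -/
noncomputable def marg {n : ℕ} {P : Type*} [Fintype P] [DecidableEq P]
    (x : (Fin n → P) → ℝ) (m : Fin n → Bool) (v : Fin n → P) : ℝ :=
  ∑ u : Fin n → P, if (∀ d, m d = true → v d = u d) then x u else 0

/-- Extension by zero of `x : (Fin n → P) → ℝ` to the augmented alphabet
`Option P`: `(ι x)(v) = x u` if `v = some ∘ u`, and `0` otherwise. -/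
noncomputable def iota {n : ℕ} {P : Type*} [Fintype P] [DecidableEq P]
    (x : (Fin n → P) → ℝ) : (Fin n → Option P) → ℝ :=
  fun v => ∑ u : Fin n → P, if (fun d => some (u d)) = v then x u else 0

/-!
Two data vectors `x₁`, `x₂` satisfy `T q τ x₁ = T q τ x₂` if and only if they have the same marginals
over every mask of positive weight, a condition that does not mention `τ` and is unaffected by
enlarging the alphabet. The direction from `T` to the marginals is the substantial one. Summing
`T q τ x` over the vectors that agree with `v` on a mask `m` gives
`∑ m', q m' * [v = τ on m \ m'] * x([v]_(m ∩ m'))`.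
If `m ⊄ m'` and `q m' ≠ 0`, then `m ∩ m'` is a strictly smaller mask still contained in a mask of
positive weight, so by induction these terms agree for `x₁` and `x₂`. What remains is `x([v]_m)` times
the total weight of the masks containing `m`, which is positive.
-/

/-- The pushforward of a signed weight `x` along `g`. The operator `T` and the extension `iota` are
both built from pushforwards, which lets their marginals be computed by one lemma. -/
def pushforward {α β : Type*} [Fintype α] [DecidableEq β] (g : α → β) (x : α → ℝ) : β → ℝ :=
  fun b => ∑ a, if g a = b then x a else 0

/-- The masking operator `f_τ(·, m)`: coordinates unobserved by `m` are filled in with `τ`. -/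
def mask {n : ℕ} {P : Type*} (τ : P) (m : Fin n → Bool) (u : Fin n → P) : Fin n → P :=
  fun d => if m d then u d else τ

lemma sum_filter_le_pos {ι R : Type*} [Fintype ι] [Preorder ι] [DecidableLE ι] [AddCommMonoid R]
    [PartialOrder R] [IsOrderedCancelAddMonoid R] {q : ι → R} {i j : ι} (hq : ∀ k, 0 ≤ q k)
    (hij : i ≤ j) (hj : q j ≠ 0) : 0 < ∑ k with i ≤ k, q k :=
  sum_pos' (fun k _ => hq k) ⟨j, mem_filter.mpr ⟨mem_univ j, hij⟩, (hq j).lt_of_ne' hj⟩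

section Marginals

variable {n : ℕ} {P : Type*} [Fintype P] [DecidableEq P]

lemma marg_top (x : (Fin n → P) → ℝ) : marg x ⊤ = x := by
  funext v
  simp [marg, ← funext_iff]

lemma marg_sum_smul {κ : Type*} (s : Finset κ) (c : κ → ℝ) (y : κ → (Fin n → P) → ℝ)
    (m : Fin n → Bool) (v : Fin n → P) :
    marg (∑ k ∈ s, c k • y k) m v = ∑ k ∈ s, c k * marg (y k) m v := by
  simp only [marg, ← sum_filter, Finset.sum_apply, Pi.smul_apply, smul_eq_mul, mul_sum]
  exact sum_comm

lemma marg_pushforward {α : Type*} [Fintype α] (g : α → Fin n → P) (x : α → ℝ)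
    (m : Fin n → Bool) (v : Fin n → P) :
    marg (pushforward g x) m v = ∑ a, if ∀ d, m d = true → v d = g a d then x a else 0 := by
  simp only [marg, pushforward, ← sum_filter]
  rw [sum_fiberwise_eq_sum_filter]
  simp only [mem_filter, mem_univ, true_and]

lemma marg_pushforward_mask (τ : P) (x : (Fin n → P) → ℝ) (m m' : Fin n → Bool) (v : Fin n → P) :
    marg (pushforward (mask τ m') x) m v =
      if ∀ d, m d = true → m' d = false → v d = τ then marg x (m ⊓ m') v else 0 := by
  have agree_mask_iff (u : Fin n → P) :
      (∀ d, m d = true → v d = mask τ m' u d) ↔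
        (∀ d, m d = true → m' d = false → v d = τ) ∧ ∀ d, (m ⊓ m') d = true → v d = u d := by
    rw [← forall_and]
    refine forall_congr' fun d => ?_
    cases hm : m d <;> cases hm' : m' d <;> simp [mask, hm, hm']
  rw [marg_pushforward]
  simp only [agree_mask_iff, ite_and]
  split_ifs
  · rfl
  · exact sum_const_zero

end Marginals

section Transition

variable {n : ℕ} {P : Type*} [Fintype P] [DecidableEq P] {q : (Fin n → Bool) → ℝ} {τ : P}
  {x₁ x₂ : (Fin n → P) → ℝ} {m m₀ : Fin n → Bool}

lemma T_eq_sum_smul_pushforward (q : (Fin n → Bool) → ℝ) (τ : P) (x : (Fin n → P) → ℝ) :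
    T q τ x = ∑ m, q m • pushforward (mask τ m) x := by
  funext v
  simp only [T, pushforward, Finset.sum_apply, Pi.smul_apply, smul_eq_mul, mul_sum, mul_ite,
    mul_one, mul_zero]
  rfl

lemma marg_T (q : (Fin n → Bool) → ℝ) (τ : P) (x : (Fin n → P) → ℝ) (m : Fin n → Bool)
    (v : Fin n → P) :
    marg (T q τ x) m v = ∑ m', q m' *
      if ∀ d, m d = true → m' d = false → v d = τ then marg x (m ⊓ m') v else 0 := by
  simp only [T_eq_sum_smul_pushforward, marg_sum_smul, marg_pushforward_mask]

lemma T_eq_of_marg_eq (h : ∀ m, q m ≠ 0 → marg x₁ m = marg x₂ m) : T q τ x₁ = T q τ x₂ := by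
  rw [← marg_top (T q τ x₁), ← marg_top (T q τ x₂)]
  funext v
  simp only [marg_T, top_inf_eq]
  refine sum_congr rfl fun m _ => ?_
  obtain hm | hm := eq_or_ne (q m) 0
  · simp only [hm, zero_mul]
  · rw [h m hm]

lemma marg_T_eq_sum_mul_marg_add (q : (Fin n → Bool) → ℝ) (τ : P) (x : (Fin n → P) → ℝ)
    (m : Fin n → Bool) (v : Fin n → P) :
    marg (T q τ x) m v = (∑ m' with m ≤ m', q m') * marg x m v + ∑ m' with ¬ m ≤ m', q m' *
      if ∀ d, m d = true → m' d = false → v d = τ then marg x (m ⊓ m') v else 0 := by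
  rw [marg_T, ← sum_filter_add_sum_filter_not _ (m ≤ ·), sum_mul]
  congr 1
  refine sum_congr rfl fun m' hm' => ?_
  have hle : m ≤ m' := (mem_filter.mp hm').2
  have no_fill : ∀ d, m d = true → m' d = false → v d = τ := fun d hd hd' =>
    absurd (hle d hd) (by simp [hd'])
  rw [if_pos no_fill, inf_eq_left.mpr hle]

lemma sum_mul_marg_eq_of_T_eq (h : T q τ x₁ = T q τ x₂)
    (hlt : ∀ m', q m' ≠ 0 → m ⊓ m' < m → marg x₁ (m ⊓ m') = marg x₂ (m ⊓ m')) (v : Fin n → P) :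
    (∑ m' with m ≤ m', q m') * marg x₁ m v = (∑ m' with m ≤ m', q m') * marg x₂ m v := by
  have smaller_terms_eq : ∀ m' ∈ univ.filter (¬ m ≤ ·),
      (q m' * if ∀ d, m d = true → m' d = false → v d = τ then marg x₁ (m ⊓ m') v else 0) =
        q m' * if ∀ d, m d = true → m' d = false → v d = τ then marg x₂ (m ⊓ m') v else 0 := by
    intro m' hm'
    obtain hq | hq := eq_or_ne (q m') 0
    · simp only [hq, zero_mul]
    · rw [hlt m' hq (inf_lt_left.mpr (mem_filter.mp hm').2)]
  have marg_T_eq : marg (T q τ x₁) m v = marg (T q τ x₂) m v := by rw [h]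
  rw [marg_T_eq_sum_mul_marg_add, marg_T_eq_sum_mul_marg_add, sum_congr rfl smaller_terms_eq]
    at marg_T_eq
  exact add_right_cancel marg_T_eq

-- The intersection of two masks of positive weight need not have positive weight, so the induction
-- has to run over all masks below one of positive weight.
lemma marg_eq_of_T_eq (hq : ∀ m, 0 ≤ q m) (h : T q τ x₁ = T q τ x₂) (hm : m ≤ m₀)
    (hm₀ : q m₀ ≠ 0) : marg x₁ m = marg x₂ m := by
  induction m using WellFoundedLT.induction generalizing m₀ with
  | ind m ih =>
    funext v
    refine mul_left_cancel₀ (sum_filter_le_pos hq hm hm₀).ne' (sum_mul_marg_eq_of_T_eq h ?_ v)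
    exact fun m' hm' hlt => ih (m ⊓ m') hlt inf_le_right hm'

theorem T_eq_T_iff (hq : ∀ m, 0 ≤ q m) :
    T q τ x₁ = T q τ x₂ ↔ ∀ m, q m ≠ 0 → marg x₁ m = marg x₂ m :=
  ⟨fun h _ hm => marg_eq_of_T_eq hq h le_rfl hm, T_eq_of_marg_eq⟩

end Transition

section Augmentation

variable {n : ℕ} {P : Type*} [Fintype P] [DecidableEq P]

lemma marg_iota (x : (Fin n → P) → ℝ) (m : Fin n → Bool) (w : Fin n → Option P) :
    marg (iota x) m w = ∑ u, if ∀ d, m d = true → w d = some (u d) then x u else 0 := by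
  have iota_eq_pushforward : iota x = pushforward (fun u d => some (u d)) x := rfl
  rw [iota_eq_pushforward, marg_pushforward]

lemma marg_iota_of_agree (x : (Fin n → P) → ℝ) {m : Fin n → Bool} {w : Fin n → Option P}
    {v : Fin n → P} (hwv : ∀ d, m d = true → w d = some (v d)) :
    marg (iota x) m w = marg x m v := by
  rw [marg_iota, marg]
  refine sum_congr rfl fun u _ => if_congr (forall₂_congr fun d hd => ?_) rfl rfl
  rw [hwv d hd, Option.some_inj]

lemma marg_iota_eq_iff {x₁ x₂ : (Fin n → P) → ℝ} {m : Fin n → Bool} :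
    marg (iota x₁) m = marg (iota x₂) m ↔ marg x₁ m = marg x₂ m := by
  refine ⟨fun h => funext fun v => ?_, fun h => funext fun w => ?_⟩
  · have agree_self : ∀ d, m d = true → some (v d) = some (v d) := fun _ _ => rfl
    rw [← marg_iota_of_agree x₁ agree_self, h, marg_iota_of_agree x₂ agree_self]
  · by_cases hw : ∃ v : Fin n → P, ∀ d, m d = true → w d = some (v d)
    · obtain ⟨v, hwv⟩ := hw
      rw [marg_iota_of_agree x₁ hwv, h, marg_iota_of_agree x₂ hwv]
    · simp only [marg_iota, if_neg (not_exists.mp hw _)]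

end Augmentation

theorem stmt15_general {n : ℕ} {P : Type*} [Fintype P] [DecidableEq P]
    {q : (Fin n → Bool) → ℝ} (hq : ∀ m, 0 ≤ q m) (τ : P) (τ' : Option P)
    (x₁ x₂ : (Fin n → P) → ℝ) :
    T q τ x₁ = T q τ x₂ ↔ T q τ' (iota x₁) = T q τ' (iota x₂) := by
  simp only [T_eq_T_iff hq, marg_iota_eq_iff]

/-- Corollary 2 (augmented-alphabet form): if two data distributions are
indistinguishable after masking with fill value `τ ∈ P`, they remain
indistinguishable when masked over the augmented alphabet `Option P` with the
distinguished fill value `ψ = none` marking exactly the missing entries. -/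
theorem stmt15 {n : ℕ} (hn : 1 ≤ n) {P : Type*} [Fintype P] [Nonempty P] [DecidableEq P]
    (q : (Fin n → Bool) → ℝ) (hq0 : ∀ m, 0 ≤ q m)
    (hq1 : (∑ m : Fin n → Bool, q m) = 1)
    (τ : P) (x₁ x₂ : (Fin n → P) → ℝ)
    (h : T q τ x₁ = T q τ x₂) :
    T (P := Option P) q none (iota x₁) = T (P := Option P) q none (iota x₂) :=
  (stmt15_general hq0 τ none x₁ x₂).mp h
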